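/- Let Δ be a program and let H_Δ be the intersection of all Herbrand models of Δ (this family is nonempty since B_L itself is a Herbrand model of Δ). Then H_Δ is itself a Herbrand model of Δ, hence the least one, and H_Δ = {A ∈ B_L | every Herbrand model of Δ contains A}. -/

import Mathlib

/-!
The least Herbrand model exists because program clauses are Horn-like.  Atoms occur only positively
in goals, so goal satisfaction is monotone in the interpretation (`GoalSat.mono`), and therefore
satisfaction of a clause is preserved by arbitrary intersections (`ClSat.sInter`): if the
intersection satisfies the body of an implication, then so does every member of the family, hence
every member satisfies the head.  Equivariance is also preserved by intersections, since swapping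
is an involution and equivariance amounts to closure under swappings
(`equivariantSet_iff`).

What remains is that the family of Herbrand models is nonempty, i.e. that the Herbrand base is a
model.  It is equivariant because swapping preserves sorts.  It satisfies every closed well-sorted
clause because each head atom reached by instantiating the quantifiers is a well-sorted ground
atom (`ClSat.base`).  For this, sorting and closedness of the head atoms are tracked together by
`HeadTyped`, relative to a partial sort assignment; it is stable under grounding substitutions and
sort-preserving renamings.
-/

/-!  Nominal logic programming: common infrastructure. -/

noncomputable section
open scoped Classical
set_option linter.unusedVariables false
set_option linter.unreachableTactic false
set_option linter.unusedTactic false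

/-- Sorts of a nominal signature: name sorts `ν`, data sorts `δ`,
and abstraction sorts `⟨ν⟩σ`. -/
inductive NomSort (N D : Type) : Type
  | name : N → NomSort N D
  | data : D → NomSort N D
  | nabs : N → NomSort N D → NomSort N D

/-- A nominal (many-sorted, first-order) signature. -/
structure NomSig : Type 1 where
  NSort : Type
  DSort : Type
  Func : Type
  Rel : Type
  fArgs : Func → List (NomSort NSort DSort)
  fRes : Func → DSort
  rArgs : Rel → List (NomSort NSort DSort)

/-- Names: countably infinitely many for each name sort. -/
abbrev NomSig.Name (L : NomSig) : Type := L.NSort × ℕ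

variable {L : NomSig}

/-- The transposition (a b) acting on names. -/
def swapName (a b c : L.Name) : L.Name :=
  if c = a then b else if c = b then a else c

/-- Nominal terms (possibly containing variables). -/
inductive Tm (L : NomSig) : Type
  | var : ℕ → Tm L
  | name : L.Name → Tm L
  | app : L.Func → List (Tm L) → Tm L
  | abs : L.Name → Tm L → Tm L

namespace Tm

/-- Apply a renaming of names to every name occurrence (including binding ones). -/
def rename (f : L.Name → L.Name) : Tm L → Tm L
  | var X => var X
  | name c => name (f c)
  | app g ts => app g (ts.attach.map fun x => rename f x.1)
  | abs c t => abs (f c) (rename f t)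
decreasing_by
  all_goals simp_wf
  all_goals first
    | (have := List.sizeOf_lt_of_mem x.2; omega)
    | omega

/-- The swapping `(a b)·t`. -/
def swap (a b : L.Name) (t : Tm L) : Tm L := t.rename (swapName a b)

/-- Apply a substitution of terms for variables. -/
def subst (θ : ℕ → Tm L) : Tm L → Tm L
  | var X => θ X
  | name c => name c
  | app g ts => app g (ts.attach.map fun x => subst θ x.1)
  | abs c t => abs c (subst θ t)
decreasing_by
  all_goals simp_wf
  all_goals first
    | (have := List.sizeOf_lt_of_mem x.2; omega)
    | omega

/-- Syntactic free-name occurrence (a name occurring outside the scope of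
an abstraction of the same name). -/
inductive FNa : L.Name → Tm L → Prop
  | name (a : L.Name) : FNa a (name a)
  | app (a : L.Name) (f : L.Func) (ts : List (Tm L)) (t : Tm L) :
      t ∈ ts → FNa a t → FNa a (app f ts)
  | abs (a b : L.Name) (t : Tm L) : a ≠ b → FNa a t → FNa a (abs b t)

/-- Free variable occurrence in a term. -/
inductive FVa : ℕ → Tm L → Prop
  | var (X : ℕ) : FVa X (var X)
  | app (X : ℕ) (f : L.Func) (ts : List (Tm L)) (t : Tm L) :
      t ∈ ts → FVa X t → FVa X (app f ts)
  | abs (X : ℕ) (b : L.Name) (t : Tm L) : FVa X t → FVa X (abs b t)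

end Tm

/-- The substitution `[t/X]`. -/
def substSingle (X : ℕ) (t : Tm L) : ℕ → Tm L := fun Y => if Y = X then t else Tm.var Y

/-- `IsTm t σ`: `t` is a well-sorted ground term of sort `σ`. -/
inductive IsTm : Tm L → NomSort L.NSort L.DSort → Prop
  | name (a : L.Name) : IsTm (Tm.name a) (NomSort.name a.1)
  | app (f : L.Func) (ts : List (Tm L)) :
      ts.length = (L.fArgs f).length →
      (∀ p ∈ ts.zip (L.fArgs f), IsTm p.1 p.2) →
      IsTm (Tm.app f ts) (NomSort.data (L.fRes f))
  | abs (a : L.Name) (t : Tm L) (σ : NomSort L.NSort L.DSort) :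
      IsTm t σ → IsTm (Tm.abs a t) (NomSort.nabs a.1 σ)

/-- Well-sortedness of a (possibly open) term relative to a sort
assignment `vs` for variables. -/
inductive TmS (vs : ℕ → NomSort L.NSort L.DSort) : Tm L → NomSort L.NSort L.DSort → Prop
  | var (X : ℕ) : TmS vs (Tm.var X) (vs X)
  | name (a : L.Name) : TmS vs (Tm.name a) (NomSort.name a.1)
  | app (f : L.Func) (ts : List (Tm L)) :
      ts.length = (L.fArgs f).length →
      (∀ p ∈ ts.zip (L.fArgs f), TmS vs p.1 p.2) →
      TmS vs (Tm.app f ts) (NomSort.data (L.fRes f))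
  | abs (a : L.Name) (t : Tm L) (σ : NomSort L.NSort L.DSort) :
      TmS vs t σ → TmS vs (Tm.abs a t) (NomSort.nabs a.1 σ)

/-- Freshness `a # t` on ground terms. -/
inductive Fresh : L.Name → Tm L → Prop
  | name (a b : L.Name) : a ≠ b → Fresh a (Tm.name b)
  | app (a : L.Name) (f : L.Func) (ts : List (Tm L)) :
      (∀ t ∈ ts, Fresh a t) → Fresh a (Tm.app f ts)
  | absSame (a : L.Name) (t : Tm L) : Fresh a (Tm.abs a t)
  | absDiff (a b : L.Name) (t : Tm L) : a ≠ b → Fresh a t → Fresh a (Tm.abs b t)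

/-- Alpha-equivalence `t ≈ u` on ground terms. -/
inductive Aeq : Tm L → Tm L → Prop
  | name (a : L.Name) : Aeq (Tm.name a) (Tm.name a)
  | app (f : L.Func) (ts us : List (Tm L)) :
      ts.length = us.length → (∀ p ∈ ts.zip us, Aeq p.1 p.2) →
      Aeq (Tm.app f ts) (Tm.app f us)
  | absSame (a : L.Name) (t u : Tm L) : Aeq t u → Aeq (Tm.abs a t) (Tm.abs a u)
  | absDiff (a b : L.Name) (t u : Tm L) :
      Fresh a u → Aeq t (Tm.swap a b u) → Aeq (Tm.abs a t) (Tm.abs b u)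

/-- The support of a ground term: the set of names not fresh for it. -/
def suppTm (t : Tm L) : Set L.Name := {a | ¬ Fresh a t}

/-- Finite sort-preserving bijections (permutations) of names. -/
def IsPerm (π : L.Name → L.Name) : Prop :=
  Function.Bijective π ∧ (∀ a, (π a).1 = a.1) ∧ {a | π a ≠ a}.Finite

/-- `t ∼ u`: equal up to a permutation of names. -/
def SimTm (t u : Tm L) : Prop := ∃ π, IsPerm π ∧ Aeq (t.rename π) u

/-- Atomic formulas `p(t₁,…,tₙ)`. -/
structure NAtom (L : NomSig) : Type where
  rel : L.Rel
  args : List (Tm L)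

def NAtom.rename (f : L.Name → L.Name) (A : NAtom L) : NAtom L :=
  ⟨A.rel, A.args.map (Tm.rename f)⟩

def NAtom.swap (a b : L.Name) (A : NAtom L) : NAtom L := A.rename (swapName a b)

def NAtom.subst (θ : ℕ → Tm L) (A : NAtom L) : NAtom L :=
  ⟨A.rel, A.args.map (Tm.subst θ)⟩

def NAtom.FNa (a : L.Name) (A : NAtom L) : Prop := ∃ t ∈ A.args, Tm.FNa a t
def NAtom.FVa (X : ℕ) (A : NAtom L) : Prop := ∃ t ∈ A.args, Tm.FVa X t

/-- Alpha-equivalence of atoms. -/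
def AtomAeq (A B : NAtom L) : Prop :=
  A.rel = B.rel ∧ A.args.length = B.args.length ∧ ∀ p ∈ A.args.zip B.args, Aeq p.1 p.2

/-- `A ∼ B` for atoms: equal up to a permutation of names. -/
def AtomSim (A B : NAtom L) : Prop := ∃ π, IsPerm π ∧ AtomAeq (A.rename π) B

/-- Well-sortedness of an atom relative to a variable sort assignment. -/
def AtomS (vs : ℕ → NomSort L.NSort L.DSort) (A : NAtom L) : Prop :=
  A.args.length = (L.rArgs A.rel).length ∧ ∀ p ∈ A.args.zip (L.rArgs A.rel), TmS vs p.1 p.2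

/-- The Herbrand base: all well-sorted ground atoms. -/
def BL (L : NomSig) : Set (NAtom L) :=
  {A | A.args.length = (L.rArgs A.rel).length ∧ ∀ p ∈ A.args.zip (L.rArgs A.rel), IsTm p.1 p.2}

/-- An equivariant set of atoms: closed under all same-sorted swappings. -/
def EquivariantSet (S : Set (NAtom L)) : Prop :=
  ∀ a b : L.Name, a.1 = b.1 → NAtom.swap a b '' S = S


/-! ### Constraints -/

/-- Constraints `C`. -/
inductive NCon (L : NomSig) : Type
  | tt : NCon L
  | eq (t u : Tm L) : NCon L
  | fr (a : L.Name) (t : Tm L) : NCon L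
  | sim (t u : Tm L) : NCon L
  | simA (A B : NAtom L) : NCon L
  | aeqA (A B : NAtom L) : NCon L
  | and (C C' : NCon L) : NCon L
  | ex (X : ℕ) (σ : NomSort L.NSort L.DSort) (C : NCon L) : NCon L
  | nu (a : L.Name) (C : NCon L) : NCon L

namespace NCon

def rename (f : L.Name → L.Name) : NCon L → NCon L
  | tt => tt
  | eq t u => eq (t.rename f) (u.rename f)
  | fr a t => fr (f a) (t.rename f)
  | sim t u => sim (t.rename f) (u.rename f)
  | simA A B => simA (A.rename f) (B.rename f)
  | aeqA A B => aeqA (A.rename f) (B.rename f)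
  | and C C' => and (rename f C) (rename f C')
  | ex X σ C => ex X σ (rename f C)
  | nu a C => nu (f a) (rename f C)

/-- Swapping `(a b)·C`, acting on all names (bound names included). -/
def swap (a b : L.Name) (C : NCon L) : NCon L := C.rename (swapName a b)

def subst (θ : ℕ → Tm L) : NCon L → NCon L
  | tt => tt
  | eq t u => eq (t.subst θ) (u.subst θ)
  | fr a t => fr a (t.subst θ)
  | sim t u => sim (t.subst θ) (u.subst θ)
  | simA A B => simA (A.subst θ) (B.subst θ)
  | aeqA A B => aeqA (A.subst θ) (B.subst θ)
  | and C C' => and (subst θ C) (subst θ C')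
  | ex X σ C => ex X σ (subst (Function.update θ X (Tm.var X)) C)
  | nu a C => nu a (subst θ C)

def size : NCon L → ℕ
  | and C C' => size C + size C' + 1
  | ex _ _ C => size C + 1
  | nu _ C => size C + 1
  | _ => 1

@[simp] theorem size_rename (f : L.Name → L.Name) :
    ∀ C : NCon L, (C.rename f).size = C.size := by
  intro C; induction C <;> simp [rename, size, *]

@[simp] theorem size_swap (a b : L.Name) (C : NCon L) : (C.swap a b).size = C.size :=
  size_rename _ C

@[simp] theorem size_subst :
    ∀ (C : NCon L) (θ : ℕ → Tm L), (C.subst θ).size = C.size := by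
  intro C; induction C <;> intro θ <;> simp [subst, size, *]

/-- Free names of a constraint. -/
inductive FNa : L.Name → NCon L → Prop
  | eq₁ (a : L.Name) (t u : Tm L) : Tm.FNa a t → FNa a (eq t u)
  | eq₂ (a : L.Name) (t u : Tm L) : Tm.FNa a u → FNa a (eq t u)
  | frN (a : L.Name) (t : Tm L) : FNa a (fr a t)
  | frT (a c : L.Name) (t : Tm L) : Tm.FNa a t → FNa a (fr c t)
  | sim₁ (a : L.Name) (t u : Tm L) : Tm.FNa a t → FNa a (sim t u)
  | sim₂ (a : L.Name) (t u : Tm L) : Tm.FNa a u → FNa a (sim t u)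
  | simA₁ (a : L.Name) (A B : NAtom L) : NAtom.FNa a A → FNa a (simA A B)
  | simA₂ (a : L.Name) (A B : NAtom L) : NAtom.FNa a B → FNa a (simA A B)
  | aeqA₁ (a : L.Name) (A B : NAtom L) : NAtom.FNa a A → FNa a (aeqA A B)
  | aeqA₂ (a : L.Name) (A B : NAtom L) : NAtom.FNa a B → FNa a (aeqA A B)
  | and₁ (a : L.Name) (C C' : NCon L) : FNa a C → FNa a (and C C')
  | and₂ (a : L.Name) (C C' : NCon L) : FNa a C' → FNa a (and C C')
  | ex (a : L.Name) (X : ℕ) (σ : NomSort L.NSort L.DSort) (C : NCon L) :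
      FNa a C → FNa a (ex X σ C)
  | nu (a c : L.Name) (C : NCon L) : a ≠ c → FNa a C → FNa a (nu c C)

/-- Free variables of a constraint. -/
inductive FVa : ℕ → NCon L → Prop
  | eq₁ (X : ℕ) (t u : Tm L) : Tm.FVa X t → FVa X (eq t u)
  | eq₂ (X : ℕ) (t u : Tm L) : Tm.FVa X u → FVa X (eq t u)
  | frT (X : ℕ) (c : L.Name) (t : Tm L) : Tm.FVa X t → FVa X (fr c t)
  | sim₁ (X : ℕ) (t u : Tm L) : Tm.FVa X t → FVa X (sim t u)
  | sim₂ (X : ℕ) (t u : Tm L) : Tm.FVa X u → FVa X (sim t u)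
  | simA₁ (X : ℕ) (A B : NAtom L) : NAtom.FVa X A → FVa X (simA A B)
  | simA₂ (X : ℕ) (A B : NAtom L) : NAtom.FVa X B → FVa X (simA A B)
  | aeqA₁ (X : ℕ) (A B : NAtom L) : NAtom.FVa X A → FVa X (aeqA A B)
  | aeqA₂ (X : ℕ) (A B : NAtom L) : NAtom.FVa X B → FVa X (aeqA A B)
  | and₁ (X : ℕ) (C C' : NCon L) : FVa X C → FVa X (and C C')
  | and₂ (X : ℕ) (C C' : NCon L) : FVa X C' → FVa X (and C C')
  | ex (X X' : ℕ) (σ : NomSort L.NSort L.DSort) (C : NCon L) :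
      X ≠ X' → FVa X C → FVa X (ex X' σ C)
  | nu (X : ℕ) (c : L.Name) (C : NCon L) : FVa X C → FVa X (nu c C)

/-- Well-sortedness of a constraint relative to a variable sort assignment. -/
def WS (vs : ℕ → NomSort L.NSort L.DSort) : NCon L → Prop
  | tt => True
  | eq t u => ∃ σ, TmS vs t σ ∧ TmS vs u σ
  | fr _ t => ∃ σ, TmS vs t σ
  | sim t u => ∃ σ, TmS vs t σ ∧ TmS vs u σ
  | simA A B => AtomS vs A ∧ AtomS vs B
  | aeqA A B => AtomS vs A ∧ AtomS vs B
  | and C C' => WS vs C ∧ WS vs C'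
  | ex X σ C => WS (Function.update vs X σ) C
  | nu _ C => WS vs C

end NCon

/-- Satisfaction `⊨ C` of a (closed) constraint. -/
def ConSat : NCon L → Prop
  | NCon.tt => True
  | NCon.eq t u => Aeq t u
  | NCon.fr a t => Fresh a t
  | NCon.sim t u => SimTm t u
  | NCon.simA A B => AtomSim A B
  | NCon.aeqA A B => AtomAeq A B
  | NCon.and C C' => ConSat C ∧ ConSat C'
  | NCon.ex X σ C => ∃ t : Tm L, IsTm t σ ∧ ConSat (C.subst (substSingle X t))
  | NCon.nu a C => ∀ b : L.Name, b.1 = a.1 → ¬ NCon.FNa b (NCon.nu a C) → ConSat (C.swap b a)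
termination_by C => C.size
decreasing_by all_goals (simp [NCon.size]; try omega)
/-! ### Goals -/

/-- Goal formulas `G`. -/
inductive NGoal (L : NomSig) : Type
  | tt : NGoal L
  | atom (A : NAtom L) : NGoal L
  | con (C : NCon L) : NGoal L
  | and (G G' : NGoal L) : NGoal L
  | or (G G' : NGoal L) : NGoal L
  | ex (X : ℕ) (σ : NomSort L.NSort L.DSort) (G : NGoal L) : NGoal L
  | nu (a : L.Name) (G : NGoal L) : NGoal L

namespace NGoal

def rename (f : L.Name → L.Name) : NGoal L → NGoal L
  | tt => tt
  | atom A => atom (A.rename f)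
  | con C => con (C.rename f)
  | and G G' => and (rename f G) (rename f G')
  | or G G' => or (rename f G) (rename f G')
  | ex X σ G => ex X σ (rename f G)
  | nu a G => nu (f a) (rename f G)

def swap (a b : L.Name) (G : NGoal L) : NGoal L := G.rename (swapName a b)

def subst (θ : ℕ → Tm L) : NGoal L → NGoal L
  | tt => tt
  | atom A => atom (A.subst θ)
  | con C => con (C.subst θ)
  | and G G' => and (subst θ G) (subst θ G')
  | or G G' => or (subst θ G) (subst θ G')
  | ex X σ G => ex X σ (subst (Function.update θ X (Tm.var X)) G)
  | nu a G => nu a (subst θ G)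

def size : NGoal L → ℕ
  | and G G' => size G + size G' + 1
  | or G G' => size G + size G' + 1
  | ex _ _ G => size G + 1
  | nu _ G => size G + 1
  | _ => 1

@[simp] theorem size_rename (f : L.Name → L.Name) :
    ∀ G : NGoal L, (G.rename f).size = G.size := by
  intro G; induction G <;> simp [rename, size, *]

@[simp] theorem size_swap (a b : L.Name) (G : NGoal L) : (G.swap a b).size = G.size :=
  size_rename _ G

@[simp] theorem size_subst :
    ∀ (G : NGoal L) (θ : ℕ → Tm L), (G.subst θ).size = G.size := by
  intro G; induction G <;> intro θ <;> simp [subst, size, *]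

/-- Free names of a goal. -/
inductive FNa : L.Name → NGoal L → Prop
  | atom (a : L.Name) (A : NAtom L) : NAtom.FNa a A → FNa a (atom A)
  | con (a : L.Name) (C : NCon L) : NCon.FNa a C → FNa a (con C)
  | and₁ (a : L.Name) (G G' : NGoal L) : FNa a G → FNa a (and G G')
  | and₂ (a : L.Name) (G G' : NGoal L) : FNa a G' → FNa a (and G G')
  | or₁ (a : L.Name) (G G' : NGoal L) : FNa a G → FNa a (or G G')
  | or₂ (a : L.Name) (G G' : NGoal L) : FNa a G' → FNa a (or G G')
  | ex (a : L.Name) (X : ℕ) (σ : NomSort L.NSort L.DSort) (G : NGoal L) :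
      FNa a G → FNa a (ex X σ G)
  | nu (a c : L.Name) (G : NGoal L) : a ≠ c → FNa a G → FNa a (nu c G)

/-- Free variables of a goal. -/
inductive FVa : ℕ → NGoal L → Prop
  | atom (X : ℕ) (A : NAtom L) : NAtom.FVa X A → FVa X (atom A)
  | con (X : ℕ) (C : NCon L) : NCon.FVa X C → FVa X (con C)
  | and₁ (X : ℕ) (G G' : NGoal L) : FVa X G → FVa X (and G G')
  | and₂ (X : ℕ) (G G' : NGoal L) : FVa X G' → FVa X (and G G')
  | or₁ (X : ℕ) (G G' : NGoal L) : FVa X G → FVa X (or G G')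
  | or₂ (X : ℕ) (G G' : NGoal L) : FVa X G' → FVa X (or G G')
  | ex (X X' : ℕ) (σ : NomSort L.NSort L.DSort) (G : NGoal L) :
      X ≠ X' → FVa X G → FVa X (ex X' σ G)
  | nu (X : ℕ) (c : L.Name) (G : NGoal L) : FVa X G → FVa X (nu c G)

/-- Well-sortedness of a goal relative to a variable sort assignment. -/
def WS (vs : ℕ → NomSort L.NSort L.DSort) : NGoal L → Prop
  | tt => True
  | atom A => AtomS vs A
  | con C => NCon.WS vs C
  | and G G' => WS vs G ∧ WS vs G'
  | or G G' => WS vs G ∧ WS vs G'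
  | ex X σ G => WS (Function.update vs X σ) G
  | nu _ G => WS vs G

end NGoal

/-- Satisfaction `S ⊨ G` of a (closed) goal by a Herbrand interpretation. -/
def GoalSat (S : Set (NAtom L)) : NGoal L → Prop
  | NGoal.tt => True
  | NGoal.atom A => A ∈ S
  | NGoal.con C => ConSat C
  | NGoal.and G G' => GoalSat S G ∧ GoalSat S G'
  | NGoal.or G G' => GoalSat S G ∨ GoalSat S G'
  | NGoal.ex X σ G => ∃ t : Tm L, IsTm t σ ∧ GoalSat S (G.subst (substSingle X t))
  | NGoal.nu a G => ∀ b : L.Name, b.1 = a.1 → ¬ NGoal.FNa b (NGoal.nu a G) →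
      GoalSat S (G.swap b a)
termination_by G => G.size
decreasing_by all_goals (simp [NGoal.size]; try omega)

/-! ### Program clauses -/

/-- Program clauses `D`. -/
inductive NCl (L : NomSig) : Type
  | tt : NCl L
  | atom (A : NAtom L) : NCl L
  | and (D D' : NCl L) : NCl L
  | imp (G : NGoal L) (D : NCl L) : NCl L
  | all (X : ℕ) (σ : NomSort L.NSort L.DSort) (D : NCl L) : NCl L
  | nu (a : L.Name) (D : NCl L) : NCl L

namespace NCl

def rename (f : L.Name → L.Name) : NCl L → NCl L
  | tt => tt
  | atom A => atom (A.rename f)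
  | and D D' => and (rename f D) (rename f D')
  | imp G D => imp (G.rename f) (rename f D)
  | all X σ D => all X σ (rename f D)
  | nu a D => nu (f a) (rename f D)

def swap (a b : L.Name) (D : NCl L) : NCl L := D.rename (swapName a b)

def subst (θ : ℕ → Tm L) : NCl L → NCl L
  | tt => tt
  | atom A => atom (A.subst θ)
  | and D D' => and (subst θ D) (subst θ D')
  | imp G D => imp (G.subst θ) (subst θ D)
  | all X σ D => all X σ (subst (Function.update θ X (Tm.var X)) D)
  | nu a D => nu a (subst θ D)

def size : NCl L → ℕ
  | and D D' => size D + size D' + 1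
  | imp _ D => size D + 1
  | all _ _ D => size D + 1
  | nu _ D => size D + 1
  | _ => 1

@[simp] theorem size_rename (f : L.Name → L.Name) :
    ∀ D : NCl L, (D.rename f).size = D.size := by
  intro D; induction D <;> simp [rename, size, *]

@[simp] theorem size_swap (a b : L.Name) (D : NCl L) : (D.swap a b).size = D.size :=
  size_rename _ D

@[simp] theorem size_subst :
    ∀ (D : NCl L) (θ : ℕ → Tm L), (D.subst θ).size = D.size := by
  intro D; induction D <;> intro θ <;> simp [subst, size, *]

/-- Free names of a program clause. -/
inductive FNa : L.Name → NCl L → Prop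
  | atom (a : L.Name) (A : NAtom L) : NAtom.FNa a A → FNa a (atom A)
  | and₁ (a : L.Name) (D D' : NCl L) : FNa a D → FNa a (and D D')
  | and₂ (a : L.Name) (D D' : NCl L) : FNa a D' → FNa a (and D D')
  | imp₁ (a : L.Name) (G : NGoal L) (D : NCl L) : NGoal.FNa a G → FNa a (imp G D)
  | imp₂ (a : L.Name) (G : NGoal L) (D : NCl L) : FNa a D → FNa a (imp G D)
  | all (a : L.Name) (X : ℕ) (σ : NomSort L.NSort L.DSort) (D : NCl L) :
      FNa a D → FNa a (all X σ D)
  | nu (a c : L.Name) (D : NCl L) : a ≠ c → FNa a D → FNa a (nu c D)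

/-- Free variables of a program clause. -/
inductive FVa : ℕ → NCl L → Prop
  | atom (X : ℕ) (A : NAtom L) : NAtom.FVa X A → FVa X (atom A)
  | and₁ (X : ℕ) (D D' : NCl L) : FVa X D → FVa X (and D D')
  | and₂ (X : ℕ) (D D' : NCl L) : FVa X D' → FVa X (and D D')
  | imp₁ (X : ℕ) (G : NGoal L) (D : NCl L) : NGoal.FVa X G → FVa X (imp G D)
  | imp₂ (X : ℕ) (G : NGoal L) (D : NCl L) : FVa X D → FVa X (imp G D)
  | all (X X' : ℕ) (σ : NomSort L.NSort L.DSort) (D : NCl L) :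
      X ≠ X' → FVa X D → FVa X (all X' σ D)
  | nu (X : ℕ) (c : L.Name) (D : NCl L) : FVa X D → FVa X (nu c D)

/-- Well-sortedness of a program clause relative to a variable sort assignment. -/
def WS (vs : ℕ → NomSort L.NSort L.DSort) : NCl L → Prop
  | tt => True
  | atom A => AtomS vs A
  | and D D' => WS vs D ∧ WS vs D'
  | imp G D => NGoal.WS vs G ∧ WS vs D
  | all X σ D => WS (Function.update vs X σ) D
  | nu _ D => WS vs D

/-- A clause with no free variables. -/
def ClosedV (D : NCl L) : Prop := ∀ X : ℕ, ¬ FVa X D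

/-- A clause with no free names. -/
def ClosedN (D : NCl L) : Prop := ∀ a : L.Name, ¬ FNa a D

/-- И-goal clauses: no И-quantified clause subformulas (goals may contain И). -/
inductive NuGoal : NCl L → Prop
  | tt : NuGoal tt
  | atom (A : NAtom L) : NuGoal (atom A)
  | and (D D' : NCl L) : NuGoal D → NuGoal D' → NuGoal (and D D')
  | imp (G : NGoal L) (D : NCl L) : NuGoal D → NuGoal (imp G D)
  | all (X : ℕ) (σ : NomSort L.NSort L.DSort) (D : NCl L) : NuGoal D → NuGoal (all X σ D)

end NCl

/-- Satisfaction `S ⊨ D` of a (closed) program clause. -/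
def ClSat (S : Set (NAtom L)) : NCl L → Prop
  | NCl.tt => True
  | NCl.atom A => A ∈ S
  | NCl.and D D' => ClSat S D ∧ ClSat S D'
  | NCl.imp G D => GoalSat S G → ClSat S D
  | NCl.all X σ D => ∀ t : Tm L, IsTm t σ → ClSat S (D.subst (substSingle X t))
  | NCl.nu a D => ∀ b : L.Name, b.1 = a.1 → ¬ NCl.FNa b (NCl.nu a D) →
      ClSat S (D.swap b a)
termination_by D => D.size
decreasing_by all_goals (simp [NCl.size]; try omega)
/-! ### General first-order nominal formulas -/

/-- Formulas of nominal logic. -/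
inductive NFm (L : NomSig) : Type
  | tt : NFm L
  | ff : NFm L
  | atom (A : NAtom L) : NFm L
  | eq (t u : Tm L) : NFm L
  | fr (a : L.Name) (t : Tm L) : NFm L
  | sim (t u : Tm L) : NFm L
  | imp (φ ψ : NFm L) : NFm L
  | and (φ ψ : NFm L) : NFm L
  | or (φ ψ : NFm L) : NFm L
  | all (X : ℕ) (σ : NomSort L.NSort L.DSort) (φ : NFm L) : NFm L
  | ex (X : ℕ) (σ : NomSort L.NSort L.DSort) (φ : NFm L) : NFm L
  | nu (a : L.Name) (φ : NFm L) : NFm L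

namespace NFm

def rename (f : L.Name → L.Name) : NFm L → NFm L
  | tt => tt
  | ff => ff
  | atom A => atom (A.rename f)
  | eq t u => eq (t.rename f) (u.rename f)
  | fr a t => fr (f a) (t.rename f)
  | sim t u => sim (t.rename f) (u.rename f)
  | imp φ ψ => imp (rename f φ) (rename f ψ)
  | and φ ψ => and (rename f φ) (rename f ψ)
  | or φ ψ => or (rename f φ) (rename f ψ)
  | all X σ φ => all X σ (rename f φ)
  | ex X σ φ => ex X σ (rename f φ)
  | nu a φ => nu (f a) (rename f φ)

/-- Swapping `(a b)·φ`. -/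
def swap (a b : L.Name) (φ : NFm L) : NFm L := φ.rename (swapName a b)

def subst (θ : ℕ → Tm L) : NFm L → NFm L
  | tt => tt
  | ff => ff
  | atom A => atom (A.subst θ)
  | eq t u => eq (t.subst θ) (u.subst θ)
  | fr a t => fr a (t.subst θ)
  | sim t u => sim (t.subst θ) (u.subst θ)
  | imp φ ψ => imp (subst θ φ) (subst θ ψ)
  | and φ ψ => and (subst θ φ) (subst θ ψ)
  | or φ ψ => or (subst θ φ) (subst θ ψ)
  | all X σ φ => all X σ (subst (Function.update θ X (Tm.var X)) φ)
  | ex X σ φ => ex X σ (subst (Function.update θ X (Tm.var X)) φ)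
  | nu a φ => nu a (subst θ φ)

def size : NFm L → ℕ
  | imp φ ψ => size φ + size ψ + 1
  | and φ ψ => size φ + size ψ + 1
  | or φ ψ => size φ + size ψ + 1
  | all _ _ φ => size φ + 1
  | ex _ _ φ => size φ + 1
  | nu _ φ => size φ + 1
  | _ => 1

@[simp] theorem size_rename (f : L.Name → L.Name) :
    ∀ φ : NFm L, (φ.rename f).size = φ.size := by
  intro φ; induction φ <;> simp [rename, size, *]

@[simp] theorem size_swap (a b : L.Name) (φ : NFm L) : (φ.swap a b).size = φ.size :=
  size_rename _ φ

@[simp] theorem size_subst :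
    ∀ (φ : NFm L) (θ : ℕ → Tm L), (φ.subst θ).size = φ.size := by
  intro φ; induction φ <;> intro θ <;> simp [subst, size, *]

/-- Free names of a formula. -/
inductive FNa : L.Name → NFm L → Prop
  | atom (a : L.Name) (A : NAtom L) : NAtom.FNa a A → FNa a (atom A)
  | eq₁ (a : L.Name) (t u : Tm L) : Tm.FNa a t → FNa a (eq t u)
  | eq₂ (a : L.Name) (t u : Tm L) : Tm.FNa a u → FNa a (eq t u)
  | frN (a : L.Name) (t : Tm L) : FNa a (fr a t)
  | frT (a c : L.Name) (t : Tm L) : Tm.FNa a t → FNa a (fr c t)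
  | sim₁ (a : L.Name) (t u : Tm L) : Tm.FNa a t → FNa a (sim t u)
  | sim₂ (a : L.Name) (t u : Tm L) : Tm.FNa a u → FNa a (sim t u)
  | imp₁ (a : L.Name) (φ ψ : NFm L) : FNa a φ → FNa a (imp φ ψ)
  | imp₂ (a : L.Name) (φ ψ : NFm L) : FNa a ψ → FNa a (imp φ ψ)
  | and₁ (a : L.Name) (φ ψ : NFm L) : FNa a φ → FNa a (and φ ψ)
  | and₂ (a : L.Name) (φ ψ : NFm L) : FNa a ψ → FNa a (and φ ψ)
  | or₁ (a : L.Name) (φ ψ : NFm L) : FNa a φ → FNa a (or φ ψ)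
  | or₂ (a : L.Name) (φ ψ : NFm L) : FNa a ψ → FNa a (or φ ψ)
  | all (a : L.Name) (X : ℕ) (σ : NomSort L.NSort L.DSort) (φ : NFm L) :
      FNa a φ → FNa a (all X σ φ)
  | ex (a : L.Name) (X : ℕ) (σ : NomSort L.NSort L.DSort) (φ : NFm L) :
      FNa a φ → FNa a (ex X σ φ)
  | nu (a c : L.Name) (φ : NFm L) : a ≠ c → FNa a φ → FNa a (nu c φ)

/-- Free variables of a formula. -/
inductive FVa : ℕ → NFm L → Prop
  | atom (X : ℕ) (A : NAtom L) : NAtom.FVa X A → FVa X (atom A)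
  | eq₁ (X : ℕ) (t u : Tm L) : Tm.FVa X t → FVa X (eq t u)
  | eq₂ (X : ℕ) (t u : Tm L) : Tm.FVa X u → FVa X (eq t u)
  | frT (X : ℕ) (c : L.Name) (t : Tm L) : Tm.FVa X t → FVa X (fr c t)
  | sim₁ (X : ℕ) (t u : Tm L) : Tm.FVa X t → FVa X (sim t u)
  | sim₂ (X : ℕ) (t u : Tm L) : Tm.FVa X u → FVa X (sim t u)
  | imp₁ (X : ℕ) (φ ψ : NFm L) : FVa X φ → FVa X (imp φ ψ)
  | imp₂ (X : ℕ) (φ ψ : NFm L) : FVa X ψ → FVa X (imp φ ψ)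
  | and₁ (X : ℕ) (φ ψ : NFm L) : FVa X φ → FVa X (and φ ψ)
  | and₂ (X : ℕ) (φ ψ : NFm L) : FVa X ψ → FVa X (and φ ψ)
  | or₁ (X : ℕ) (φ ψ : NFm L) : FVa X φ → FVa X (or φ ψ)
  | or₂ (X : ℕ) (φ ψ : NFm L) : FVa X ψ → FVa X (or φ ψ)
  | all (X X' : ℕ) (σ : NomSort L.NSort L.DSort) (φ : NFm L) :
      X ≠ X' → FVa X φ → FVa X (all X' σ φ)
  | ex (X X' : ℕ) (σ : NomSort L.NSort L.DSort) (φ : NFm L) :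
      X ≠ X' → FVa X φ → FVa X (ex X' σ φ)
  | nu (X : ℕ) (c : L.Name) (φ : NFm L) : FVa X φ → FVa X (nu c φ)

end NFm

/-- Satisfaction `S ⊨ φ` of a (closed) formula by a Herbrand interpretation. -/
def FmSat (S : Set (NAtom L)) : NFm L → Prop
  | NFm.tt => True
  | NFm.ff => False
  | NFm.atom A => A ∈ S
  | NFm.eq t u => Aeq t u
  | NFm.fr a t => Fresh a t
  | NFm.sim t u => SimTm t u
  | NFm.imp φ ψ => FmSat S φ → FmSat S ψ
  | NFm.and φ ψ => FmSat S φ ∧ FmSat S ψ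
  | NFm.or φ ψ => FmSat S φ ∨ FmSat S ψ
  | NFm.all X σ φ => ∀ t : Tm L, IsTm t σ → FmSat S (φ.subst (substSingle X t))
  | NFm.ex X σ φ => ∃ t : Tm L, IsTm t σ ∧ FmSat S (φ.subst (substSingle X t))
  | NFm.nu a φ => ∀ b : L.Name, b.1 = a.1 → ¬ NFm.FNa b (NFm.nu a φ) →
      FmSat S (φ.swap b a)
termination_by φ => φ.size
decreasing_by all_goals (simp [NFm.size]; try omega)
/-! ### Herbrand models and the one-step deduction operator -/

/-- A Herbrand model of a set of (closed) program clauses: an equivariant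
subset of the Herbrand base satisfying every clause. -/
def IsHModel (Δ : Set (NCl L)) (H : Set (NAtom L)) : Prop :=
  H ⊆ BL L ∧ EquivariantSet H ∧ ∀ D ∈ Δ, ClSat H D

/-- The one-step deduction operator `T_D`. -/
def TOp : NCl L → Set (NAtom L) → Set (NAtom L)
  | NCl.tt, S => S
  | NCl.atom A, S => S ∪ {A}
  | NCl.and D D', S => TOp D S ∪ TOp D' S
  | NCl.imp G D, S => if GoalSat S G then TOp D S else S
  | NCl.all X σ D, S => ⋃ (t : Tm L) (_ : IsTm t σ), TOp (D.subst (substSingle X t)) S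
  | NCl.nu a D, S =>
      ⋃ (b : L.Name) (_ : b.1 = a.1 ∧ ¬ NCl.FNa b (NCl.nu a D)), TOp (D.swap a b) S
termination_by D _ => D.size
decreasing_by all_goals (simp [NCl.size]; try omega)

/-- The one-step deduction operator `T_Δ` of a (nonempty) program
`Δ = {D₁,…,Dₙ}`, i.e. `T_{D₁ ∧ ⋯ ∧ Dₙ}`. -/
def TProg (Δ : Set (NCl L)) (S : Set (NAtom L)) : Set (NAtom L) :=
  ⋃ D ∈ Δ, TOp D S

/-! ### Contexts, substitutions and constraint entailment -/

/-- Context bindings: variable bindings `X:σ` and name bindings `#a:ν`. -/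
inductive CtxBind (L : NomSig) : Type
  | v (X : ℕ) (σ : NomSort L.NSort L.DSort) : CtxBind L
  | n (a : L.Name) : CtxBind L

/-- Contexts, as lists of bindings with the *most recent binding first*. -/
abbrev Ctxx (L : NomSig) : Type := List (CtxBind L)

/-- The variables declared in a context. -/
def ctxVars : Ctxx L → Set ℕ
  | [] => ∅
  | CtxBind.v X _ :: Ξ => insert X (ctxVars Ξ)
  | CtxBind.n _ :: Ξ => ctxVars Ξ

/-- The names declared in a context. -/
def ctxNames : Ctxx L → Set L.Name
  | [] => ∅
  | CtxBind.v _ _ :: Ξ => ctxNames Ξ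
  | CtxBind.n a :: Ξ => insert a (ctxNames Ξ)

def CtxBind.key : CtxBind L → ℕ ⊕ L.Name
  | v X _ => Sum.inl X
  | n a => Sum.inr a

/-- All bindings of a context are distinct. -/
def CtxWF (Ξ : Ctxx L) : Prop := Ξ.Pairwise (fun b c => b.key ≠ c.key)

/-- `θ : Σ`: the ground substitution `θ` satisfies the context `Σ`. -/
def SubstOk : Ctxx L → (ℕ → Tm L) → Prop
  | [], _ => True
  | CtxBind.v X σ :: Ξ, θ => IsTm (θ X) σ ∧ SubstOk Ξ θ
  | CtxBind.n a :: Ξ, θ => (∀ X ∈ ctxVars Ξ, Fresh a (θ X)) ∧ SubstOk Ξ θ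

/-- `θ` satisfies every constraint in `∇`. -/
def SatAll (θ : ℕ → Tm L) (Φ : Finset (NCon L)) : Prop :=
  ∀ C ∈ Φ, ConSat (C.subst θ)

/-- Constraint entailment `Σ;∇ ⊨ C`. -/
def EntC (Ξ : Ctxx L) (Φ : Finset (NCon L)) (C : NCon L) : Prop :=
  ∀ θ : ℕ → Tm L, SubstOk Ξ θ → SatAll θ Φ → ConSat (C.subst θ)

/-- The free variables and names of a constraint are declared in `Σ`. -/
def ConDecl (Ξ : Ctxx L) (C : NCon L) : Prop :=
  (∀ X, NCon.FVa X C → X ∈ ctxVars Ξ) ∧ (∀ a, NCon.FNa a C → a ∈ ctxNames Ξ)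

/-- The free variables and names of a goal are declared in `Σ`. -/
def GoalDecl (Ξ : Ctxx L) (G : NGoal L) : Prop :=
  (∀ X, NGoal.FVa X G → X ∈ ctxVars Ξ) ∧ (∀ a, NGoal.FNa a G → a ∈ ctxNames Ξ)

/-- The free variables and names of a program clause are declared in `Σ`. -/
def ClDecl (Ξ : Ctxx L) (D : NCl L) : Prop :=
  (∀ X, NCl.FVa X D → X ∈ ctxVars Ξ) ∧ (∀ a, NCl.FNa a D → a ∈ ctxNames Ξ)

/-- The free variables and names of an atom are declared in `Σ`. -/
def AtomDecl (Ξ : Ctxx L) (A : NAtom L) : Prop :=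
  (∀ X, NAtom.FVa X A → X ∈ ctxVars Ξ) ∧ (∀ a, NAtom.FNa a A → a ∈ ctxNames Ξ)

/-! ### Uniform / focused proof search -/

mutual
/-- Uniform derivability `Σ;Δ;∇ ⟶ G`. -/
inductive UD (Δ : Set (NCl L)) : Ctxx L → Finset (NCon L) → NGoal L → Prop
  | top (Ξ : Ctxx L) (Φ : Finset (NCon L)) : UD Δ Ξ Φ NGoal.tt
  | con (Ξ : Ctxx L) (Φ : Finset (NCon L)) (C : NCon L) :
      EntC Ξ Φ C → UD Δ Ξ Φ (NGoal.con C)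
  | andR (Ξ : Ctxx L) (Φ : Finset (NCon L)) (G₁ G₂ : NGoal L) :
      UD Δ Ξ Φ G₁ → UD Δ Ξ Φ G₂ → UD Δ Ξ Φ (NGoal.and G₁ G₂)
  | orR₁ (Ξ : Ctxx L) (Φ : Finset (NCon L)) (G₁ G₂ : NGoal L) :
      UD Δ Ξ Φ G₁ → UD Δ Ξ Φ (NGoal.or G₁ G₂)
  | orR₂ (Ξ : Ctxx L) (Φ : Finset (NCon L)) (G₁ G₂ : NGoal L) :
      UD Δ Ξ Φ G₂ → UD Δ Ξ Φ (NGoal.or G₁ G₂)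
  | exR (Ξ : Ctxx L) (Φ : Finset (NCon L)) (X : ℕ) (σ : NomSort L.NSort L.DSort)
      (C : NCon L) (G : NGoal L) :
      EntC Ξ Φ (NCon.ex X σ C) → UD Δ (CtxBind.v X σ :: Ξ) (insert C Φ) G →
      UD Δ Ξ Φ (NGoal.ex X σ G)
  | nuR (Ξ : Ctxx L) (Φ : Finset (NCon L)) (a : L.Name) (C : NCon L) (G : NGoal L) :
      EntC Ξ Φ (NCon.nu a C) → UD Δ (CtxBind.n a :: Ξ) (insert C Φ) G →
      UD Δ Ξ Φ (NGoal.nu a G)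
  | sel (Ξ : Ctxx L) (Φ : Finset (NCon L)) (D : NCl L) (A : NAtom L) :
      D ∈ Δ → FD Δ Ξ Φ D A → UD Δ Ξ Φ (NGoal.atom A)

/-- Focused derivability `Σ;Δ;∇ ⟶ [D] ⇒ A`. -/
inductive FD (Δ : Set (NCl L)) : Ctxx L → Finset (NCon L) → NCl L → NAtom L → Prop
  | hyp (Ξ : Ctxx L) (Φ : Finset (NCon L)) (A' A : NAtom L) :
      EntC Ξ Φ (NCon.simA A' A) → FD Δ Ξ Φ (NCl.atom A') A
  | andL₁ (Ξ : Ctxx L) (Φ : Finset (NCon L)) (D₁ D₂ : NCl L) (A : NAtom L) :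
      FD Δ Ξ Φ D₁ A → FD Δ Ξ Φ (NCl.and D₁ D₂) A
  | andL₂ (Ξ : Ctxx L) (Φ : Finset (NCon L)) (D₁ D₂ : NCl L) (A : NAtom L) :
      FD Δ Ξ Φ D₂ A → FD Δ Ξ Φ (NCl.and D₁ D₂) A
  | impL (Ξ : Ctxx L) (Φ : Finset (NCon L)) (G : NGoal L) (D : NCl L) (A : NAtom L) :
      FD Δ Ξ Φ D A → UD Δ Ξ Φ G → FD Δ Ξ Φ (NCl.imp G D) A
  | allL (Ξ : Ctxx L) (Φ : Finset (NCon L)) (X : ℕ) (σ : NomSort L.NSort L.DSort)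
      (C : NCon L) (D : NCl L) (A : NAtom L) :
      EntC Ξ Φ (NCon.ex X σ C) → FD Δ (CtxBind.v X σ :: Ξ) (insert C Φ) D A →
      FD Δ Ξ Φ (NCl.all X σ D) A
  | nuL (Ξ : Ctxx L) (Φ : Finset (NCon L)) (a : L.Name) (C : NCon L) (D : NCl L)
      (A : NAtom L) :
      EntC Ξ Φ (NCon.nu a C) → FD Δ (CtxBind.n a :: Ξ) (insert C Φ) D A →
      FD Δ Ξ Φ (NCl.nu a D) A
end

mutual
/-- Uniform derivability for ≈-resolution, `Σ;Δ;∇ ⟶≈ G`. -/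
inductive UDe (Δ : Set (NCl L)) : Ctxx L → Finset (NCon L) → NGoal L → Prop
  | top (Ξ : Ctxx L) (Φ : Finset (NCon L)) : UDe Δ Ξ Φ NGoal.tt
  | con (Ξ : Ctxx L) (Φ : Finset (NCon L)) (C : NCon L) :
      EntC Ξ Φ C → UDe Δ Ξ Φ (NGoal.con C)
  | andR (Ξ : Ctxx L) (Φ : Finset (NCon L)) (G₁ G₂ : NGoal L) :
      UDe Δ Ξ Φ G₁ → UDe Δ Ξ Φ G₂ → UDe Δ Ξ Φ (NGoal.and G₁ G₂)
  | orR₁ (Ξ : Ctxx L) (Φ : Finset (NCon L)) (G₁ G₂ : NGoal L) :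
      UDe Δ Ξ Φ G₁ → UDe Δ Ξ Φ (NGoal.or G₁ G₂)
  | orR₂ (Ξ : Ctxx L) (Φ : Finset (NCon L)) (G₁ G₂ : NGoal L) :
      UDe Δ Ξ Φ G₂ → UDe Δ Ξ Φ (NGoal.or G₁ G₂)
  | exR (Ξ : Ctxx L) (Φ : Finset (NCon L)) (X : ℕ) (σ : NomSort L.NSort L.DSort)
      (C : NCon L) (G : NGoal L) :
      EntC Ξ Φ (NCon.ex X σ C) → UDe Δ (CtxBind.v X σ :: Ξ) (insert C Φ) G →
      UDe Δ Ξ Φ (NGoal.ex X σ G)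
  | nuR (Ξ : Ctxx L) (Φ : Finset (NCon L)) (a : L.Name) (C : NCon L) (G : NGoal L) :
      EntC Ξ Φ (NCon.nu a C) → UDe Δ (CtxBind.n a :: Ξ) (insert C Φ) G →
      UDe Δ Ξ Φ (NGoal.nu a G)
  | sel (Ξ : Ctxx L) (Φ : Finset (NCon L)) (D : NCl L) (A : NAtom L) :
      D ∈ Δ → FDe Δ Ξ Φ D A → UDe Δ Ξ Φ (NGoal.atom A)

/-- Focused derivability for ≈-resolution, `Σ;Δ;∇ ⟶≈ [D] ⇒ A`. -/
inductive FDe (Δ : Set (NCl L)) : Ctxx L → Finset (NCon L) → NCl L → NAtom L → Prop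
  | hyp (Ξ : Ctxx L) (Φ : Finset (NCon L)) (A' A : NAtom L) :
      EntC Ξ Φ (NCon.aeqA A' A) → FDe Δ Ξ Φ (NCl.atom A') A
  | andL₁ (Ξ : Ctxx L) (Φ : Finset (NCon L)) (D₁ D₂ : NCl L) (A : NAtom L) :
      FDe Δ Ξ Φ D₁ A → FDe Δ Ξ Φ (NCl.and D₁ D₂) A
  | andL₂ (Ξ : Ctxx L) (Φ : Finset (NCon L)) (D₁ D₂ : NCl L) (A : NAtom L) :
      FDe Δ Ξ Φ D₂ A → FDe Δ Ξ Φ (NCl.and D₁ D₂) A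
  | impL (Ξ : Ctxx L) (Φ : Finset (NCon L)) (G : NGoal L) (D : NCl L) (A : NAtom L) :
      FDe Δ Ξ Φ D A → UDe Δ Ξ Φ G → FDe Δ Ξ Φ (NCl.imp G D) A
  | allL (Ξ : Ctxx L) (Φ : Finset (NCon L)) (X : ℕ) (σ : NomSort L.NSort L.DSort)
      (C : NCon L) (D : NCl L) (A : NAtom L) :
      EntC Ξ Φ (NCon.ex X σ C) → FDe Δ (CtxBind.v X σ :: Ξ) (insert C Φ) D A →
      FDe Δ Ξ Φ (NCl.all X σ D) A
  | nuL (Ξ : Ctxx L) (Φ : Finset (NCon L)) (a : L.Name) (C : NCon L) (D : NCl L)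
      (A : NAtom L) :
      EntC Ξ Φ (NCon.nu a C) → FDe Δ (CtxBind.n a :: Ξ) (insert C Φ) D A →
      FDe Δ Ξ Φ (NCl.nu a D) A
end

/-! ### Residuated proof search -/

mutual
/-- Residuated uniform derivability `Σ;Δ ⟶ G ↘ C`. -/
inductive RG (Δ : Set (NCl L)) : Ctxx L → NGoal L → NCon L → Prop
  | con (Ξ : Ctxx L) (C : NCon L) : RG Δ Ξ (NGoal.con C) C
  | top (Ξ : Ctxx L) : RG Δ Ξ NGoal.tt NCon.tt
  | andR (Ξ : Ctxx L) (G₁ G₂ : NGoal L) (C₁ C₂ : NCon L) :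
      RG Δ Ξ G₁ C₁ → RG Δ Ξ G₂ C₂ → RG Δ Ξ (NGoal.and G₁ G₂) (NCon.and C₁ C₂)
  | orR₁ (Ξ : Ctxx L) (G₁ G₂ : NGoal L) (C : NCon L) :
      RG Δ Ξ G₁ C → RG Δ Ξ (NGoal.or G₁ G₂) C
  | orR₂ (Ξ : Ctxx L) (G₁ G₂ : NGoal L) (C : NCon L) :
      RG Δ Ξ G₂ C → RG Δ Ξ (NGoal.or G₁ G₂) C
  | exR (Ξ : Ctxx L) (X : ℕ) (σ : NomSort L.NSort L.DSort) (G : NGoal L) (C : NCon L) :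
      RG Δ (CtxBind.v X σ :: Ξ) G C → RG Δ Ξ (NGoal.ex X σ G) (NCon.ex X σ C)
  | nuR (Ξ : Ctxx L) (a : L.Name) (G : NGoal L) (C : NCon L) :
      RG Δ (CtxBind.n a :: Ξ) G C → RG Δ Ξ (NGoal.nu a G) (NCon.nu a C)
  | back (Ξ : Ctxx L) (A : NAtom L) (D : NCl L) (G : NGoal L) (C : NCon L) :
      D ∈ Δ → RF Δ Ξ D A G → RG Δ Ξ G C → RG Δ Ξ (NGoal.atom A) C

/-- Residuated focused derivability `Σ;Δ ⟶ [D] ⇒ A ↘ G`. -/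
inductive RF (Δ : Set (NCl L)) : Ctxx L → NCl L → NAtom L → NGoal L → Prop
  | hyp (Ξ : Ctxx L) (A' A : NAtom L) :
      RF Δ Ξ (NCl.atom A') A (NGoal.con (NCon.simA A A'))
  | andL₁ (Ξ : Ctxx L) (D₁ D₂ : NCl L) (A : NAtom L) (G : NGoal L) :
      RF Δ Ξ D₁ A G → RF Δ Ξ (NCl.and D₁ D₂) A G
  | andL₂ (Ξ : Ctxx L) (D₁ D₂ : NCl L) (A : NAtom L) (G : NGoal L) :
      RF Δ Ξ D₂ A G → RF Δ Ξ (NCl.and D₁ D₂) A G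
  | impL (Ξ : Ctxx L) (G : NGoal L) (D : NCl L) (A : NAtom L) (G' : NGoal L) :
      RF Δ Ξ D A G' → RF Δ Ξ (NCl.imp G D) A (NGoal.and G G')
  | allL (Ξ : Ctxx L) (X : ℕ) (σ : NomSort L.NSort L.DSort) (D : NCl L) (A : NAtom L)
      (G : NGoal L) :
      RF Δ (CtxBind.v X σ :: Ξ) D A G → RF Δ Ξ (NCl.all X σ D) A (NGoal.ex X σ G)
  | nuL (Ξ : Ctxx L) (a : L.Name) (D : NCl L) (A : NAtom L) (G : NGoal L) :
      RF Δ (CtxBind.n a :: Ξ) D A G → RF Δ Ξ (NCl.nu a D) A (NGoal.nu a G)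
end

/-! ### Operational semantics -/

/-- Operational states `⟨Σ; Γ; ∇⟩`. -/
structure OState (L : NomSig) : Type where
  ctx : Ctxx L
  goals : List (NGoal L)
  cons : Finset (NCon L)

/-- The operational transition relation relative to a program `Δ`. -/
inductive OStep (Δ : Set (NCl L)) : OState L → OState L → Prop
  | back (Ξ : Ctxx L) (Φ : Finset (NCon L)) (Γ : List (NGoal L)) (D : NCl L)
      (A : NAtom L) (G : NGoal L) :
      D ∈ Δ → RF Δ Ξ D A G →
      OStep Δ ⟨Ξ, NGoal.atom A :: Γ, Φ⟩ ⟨Ξ, G :: Γ, Φ⟩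
  | con (Ξ : Ctxx L) (Φ : Finset (NCon L)) (Γ : List (NGoal L)) (C : NCon L) :
      (∃ θ : ℕ → Tm L, SubstOk Ξ θ ∧ SatAll θ (insert C Φ)) →
      OStep Δ ⟨Ξ, NGoal.con C :: Γ, Φ⟩ ⟨Ξ, Γ, insert C Φ⟩
  | top (Ξ : Ctxx L) (Φ : Finset (NCon L)) (Γ : List (NGoal L)) :
      OStep Δ ⟨Ξ, NGoal.tt :: Γ, Φ⟩ ⟨Ξ, Γ, Φ⟩
  | and (Ξ : Ctxx L) (Φ : Finset (NCon L)) (Γ : List (NGoal L)) (G₁ G₂ : NGoal L) :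
      OStep Δ ⟨Ξ, NGoal.and G₁ G₂ :: Γ, Φ⟩ ⟨Ξ, G₁ :: G₂ :: Γ, Φ⟩
  | or₁ (Ξ : Ctxx L) (Φ : Finset (NCon L)) (Γ : List (NGoal L)) (G₁ G₂ : NGoal L) :
      OStep Δ ⟨Ξ, NGoal.or G₁ G₂ :: Γ, Φ⟩ ⟨Ξ, G₁ :: Γ, Φ⟩
  | or₂ (Ξ : Ctxx L) (Φ : Finset (NCon L)) (Γ : List (NGoal L)) (G₁ G₂ : NGoal L) :
      OStep Δ ⟨Ξ, NGoal.or G₁ G₂ :: Γ, Φ⟩ ⟨Ξ, G₂ :: Γ, Φ⟩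
  | ex (Ξ : Ctxx L) (Φ : Finset (NCon L)) (Γ : List (NGoal L)) (X : ℕ)
      (σ : NomSort L.NSort L.DSort) (G : NGoal L) :
      OStep Δ ⟨Ξ, NGoal.ex X σ G :: Γ, Φ⟩ ⟨CtxBind.v X σ :: Ξ, G :: Γ, Φ⟩
  | nu (Ξ : Ctxx L) (Φ : Finset (NCon L)) (Γ : List (NGoal L)) (a : L.Name)
      (G : NGoal L) :
      OStep Δ ⟨Ξ, NGoal.nu a G :: Γ, Φ⟩ ⟨CtxBind.n a :: Ξ, G :: Γ, Φ⟩

/-- `∃Σ[C]`: close a constraint by quantifying over all bindings of a context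
(innermost quantifier for the most recent binding). -/
def exCtx : Ctxx L → NCon L → NCon L
  | [], C => C
  | CtxBind.v X σ :: Ξ, C => exCtx Ξ (NCon.ex X σ C)
  | CtxBind.n a :: Ξ, C => exCtx Ξ (NCon.nu a C)

/-- The conjunction of a finite set of constraints. -/
def bigAnd (Φ : Finset (NCon L)) : NCon L := Φ.toList.foldr NCon.and NCon.tt
/-! ### Swapping and equivariance -/

theorem Tm.rename_app (f : L.Name → L.Name) (g : L.Func) (ts : List (Tm L)) :
    (Tm.app g ts).rename f = Tm.app g (ts.map (Tm.rename f)) := by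
  rw [Tm.rename]; simp

theorem Tm.subst_app (θ : ℕ → Tm L) (g : L.Func) (ts : List (Tm L)) :
    (Tm.app g ts).subst θ = Tm.app g (ts.map (Tm.subst θ)) := by
  rw [Tm.subst]; simp

theorem swapName_swapName (a b c : L.Name) : swapName a b (swapName a b c) = c := by
  unfold swapName; split_ifs <;> simp_all

theorem swapName_fst {a b : L.Name} (h : a.1 = b.1) (c : L.Name) :
    (swapName a b c).1 = c.1 := by
  unfold swapName; split_ifs <;> simp_all

theorem Tm.rename_rename {f : L.Name → L.Name} (hf : ∀ c, f (f c) = c) (t : Tm L) :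
    (t.rename f).rename f = t := by
  induction t using Tm.rename.induct with
  | case1 X => simp [Tm.rename]
  | case2 c => simp [Tm.rename, hf]
  | case3 g ts ih =>
    rw [Tm.rename_app, Tm.rename_app, List.map_map]
    congr 1
    conv_rhs => rw [← List.map_id ts]
    exact List.map_congr_left fun t ht => ih ⟨t, ht⟩
  | case4 c t ih => simp [Tm.rename, hf, ih]

theorem NAtom.swap_swap (a b : L.Name) (A : NAtom L) : (A.swap a b).swap a b = A := by
  have h : Tm.rename (swapName a b) ∘ Tm.rename (swapName a b) = (id : Tm L → Tm L) :=
    funext (Tm.rename_rename (swapName_swapName a b))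
  cases A
  simp [NAtom.swap, NAtom.rename, h]

/-- Since swapping is an involution, closure under swappings already gives equivariance. -/
theorem equivariantSet_iff {S : Set (NAtom L)} :
    EquivariantSet S ↔ ∀ a b : L.Name, a.1 = b.1 → ∀ A ∈ S, A.swap a b ∈ S := by
  constructor
  · intro h a b hab A hA
    rw [← h a b hab]
    exact ⟨A, hA, rfl⟩
  · intro h a b hab
    apply Set.Subset.antisymm
    · rintro _ ⟨A, hA, rfl⟩
      exact h a b hab A hA
    · intro A hA
      exact ⟨A.swap a b, h a b hab A hA, NAtom.swap_swap a b A⟩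

theorem EquivariantSet.sInter {F : Set (Set (NAtom L))} (hF : ∀ H ∈ F, EquivariantSet H) :
    EquivariantSet (⋂₀ F) :=
  equivariantSet_iff.2 fun a b hab A hA H hH =>
    equivariantSet_iff.1 (hF H hH) a b hab A (hA H hH)

/-! ### Monotonicity of goals and intersections of interpretations -/

theorem GoalSat.mono {S S' : Set (NAtom L)} (hS : S ⊆ S') (G : NGoal L) :
    GoalSat S G → GoalSat S' G := by
  induction hn : G.size using Nat.strong_induction_on generalizing G with
  | _ n ih =>
    subst hn
    cases G with
    | tt => simp [GoalSat]
    | atom A => simpa [GoalSat] using @hS A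
    | con C => simp [GoalSat]
    | and G G' =>
      simp only [GoalSat]
      exact And.imp (ih _ (by simp [NGoal.size]) G rfl)
        (ih _ (by simp [NGoal.size]) G' rfl)
    | or G G' =>
      simp only [GoalSat]
      exact Or.imp (ih _ (by simp [NGoal.size]) G rfl)
        (ih _ (by simp [NGoal.size]) G' rfl)
    | ex X σ G =>
      simp only [GoalSat]
      rintro ⟨t, ht, h⟩
      exact ⟨t, ht, ih _ (by simp [NGoal.size]) _ rfl h⟩
    | nu a G =>
      simp only [GoalSat]
      intro h b hb hfr
      exact ih _ (by simp [NGoal.size]) _ rfl (h b hb hfr)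

/-- Clauses are preserved by intersections; in the implication case monotonicity of goals
transfers the body from the intersection to each member of the family. -/
theorem ClSat.sInter {F : Set (Set (NAtom L))} (D : NCl L) :
    (∀ H ∈ F, ClSat H D) → ClSat (⋂₀ F) D := by
  induction hn : D.size using Nat.strong_induction_on generalizing D with
  | _ n ih =>
    subst hn
    cases D with
    | tt => simp [ClSat]
    | atom A => simp [ClSat]
    | and D D' =>
      simp only [ClSat]
      intro h
      exact ⟨ih _ (by simp [NCl.size]) D rfl fun H hH => (h H hH).1,
        ih _ (by simp [NCl.size]) D' rfl fun H hH => (h H hH).2⟩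
    | imp G D =>
      simp only [ClSat]
      intro h hG
      exact ih _ (by simp [NCl.size]) D rfl fun H hH =>
        h H hH (GoalSat.mono (Set.sInter_subset_of_mem hH) G hG)
    | all X σ D =>
      simp only [ClSat]
      intro h t ht
      exact ih _ (by simp [NCl.size]) _ rfl fun H hH => h H hH t ht
    | nu a D =>
      simp only [ClSat]
      intro h b hb hfr
      exact ih _ (by simp [NCl.size]) _ rfl fun H hH => h H hH b hb hfr

/-! ### Sorting relative to a partial sort assignment -/

/-- Well-sortedness relative to a partial assignment `Γ` of sorts to variables.  Variables outside
the domain of `Γ` are not allowed, so the empty assignment gives exactly the ground terms. -/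
inductive TmTyped (Γ : ℕ → Option (NomSort L.NSort L.DSort)) :
    Tm L → NomSort L.NSort L.DSort → Prop
  | var (X : ℕ) (σ : NomSort L.NSort L.DSort) : Γ X = some σ → TmTyped Γ (Tm.var X) σ
  | name (a : L.Name) : TmTyped Γ (Tm.name a) (NomSort.name a.1)
  | app (f : L.Func) (ts : List (Tm L)) :
      ts.length = (L.fArgs f).length →
      (∀ p ∈ ts.zip (L.fArgs f), TmTyped Γ p.1 p.2) →
      TmTyped Γ (Tm.app f ts) (NomSort.data (L.fRes f))
  | abs (a : L.Name) (t : Tm L) (σ : NomSort L.NSort L.DSort) :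
      TmTyped Γ t σ → TmTyped Γ (Tm.abs a t) (NomSort.nabs a.1 σ)

/-- Componentwise extension of `TmTyped` to atoms. -/
def AtomTyped (Γ : ℕ → Option (NomSort L.NSort L.DSort)) (A : NAtom L) : Prop :=
  A.args.length = (L.rArgs A.rel).length ∧
    ∀ p ∈ A.args.zip (L.rArgs A.rel), TmTyped Γ p.1 p.2

/-- Every head atom of a clause is well-sorted relative to `Γ` extended by the enclosing universal
quantifiers.  Bodies of implications are ignored. -/
def HeadTyped : (ℕ → Option (NomSort L.NSort L.DSort)) → NCl L → Prop
  | _, NCl.tt => True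
  | Γ, NCl.atom A => AtomTyped Γ A
  | Γ, NCl.and D D' => HeadTyped Γ D ∧ HeadTyped Γ D'
  | Γ, NCl.imp _ D => HeadTyped Γ D
  | Γ, NCl.all X σ D => HeadTyped (Function.update Γ X (some σ)) D
  | Γ, NCl.nu _ D => HeadTyped Γ D

/-- `θ` maps each variable in the domain of `Γ` to a ground term of its sort, or leaves it alone,
in which case `Γ'` gives it the same sort.  This excludes variable capture under quantifiers. -/
def GroundingSubst (Γ Γ' : ℕ → Option (NomSort L.NSort L.DSort)) (θ : ℕ → Tm L) : Prop :=
  ∀ X σ, Γ X = some σ → IsTm (θ X) σ ∨ (θ X = Tm.var X ∧ Γ' X = some σ)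

theorem TmTyped.of_isTm {Γ : ℕ → Option (NomSort L.NSort L.DSort)} {t : Tm L}
    {σ : NomSort L.NSort L.DSort} (h : IsTm t σ) : TmTyped Γ t σ := by
  induction h with
  | name a => exact .name a
  | app f ts hl _ ih => exact .app f ts hl ih
  | abs a t σ _ ih => exact .abs a t σ ih

theorem TmTyped.isTm {t : Tm L} {σ : NomSort L.NSort L.DSort}
    (h : TmTyped (fun _ => none) t σ) : IsTm t σ := by
  induction h with
  | var X σ h => cases h
  | name a => exact .name a
  | app f ts hl _ ih => exact .app f ts hl ih
  | abs a t σ _ ih => exact .abs a t σ ih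

theorem TmTyped.of_tmS {Γ : ℕ → Option (NomSort L.NSort L.DSort)}
    {vs : ℕ → NomSort L.NSort L.DSort} {t : Tm L} {σ : NomSort L.NSort L.DSort}
    (h : TmS vs t σ) (hΓ : ∀ X, Tm.FVa X t → Γ X = some (vs X)) : TmTyped Γ t σ := by
  induction h with
  | var X => exact .var X _ (hΓ X (.var X))
  | name a => exact .name a
  | app f ts hl _ ih =>
    exact .app f ts hl fun p hp =>
      ih p hp fun X hX => hΓ X (.app X f ts p.1 (List.of_mem_zip hp).1 hX)
  | abs a t σ _ ih => exact .abs a t σ (ih fun X hX => hΓ X (.abs X a t hX))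

theorem forall_mem_zip_map {α β γ : Type} {f : α → γ} {l : List α} {m : List β}
    {P : γ × β → Prop} (h : ∀ p ∈ l.zip m, P (f p.1, p.2)) : ∀ p ∈ (l.map f).zip m, P p := by
  intro p hp
  rw [List.zip_map_left, List.mem_map] at hp
  obtain ⟨q, hq, rfl⟩ := hp
  exact h q hq

theorem TmTyped.rename {Γ : ℕ → Option (NomSort L.NSort L.DSort)} {f : L.Name → L.Name}
    (hf : ∀ c, (f c).1 = c.1) {t : Tm L} {σ : NomSort L.NSort L.DSort}
    (h : TmTyped Γ t σ) : TmTyped Γ (t.rename f) σ := by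
  induction h with
  | var X σ h => rw [Tm.rename]; exact .var X σ h
  | name a => rw [Tm.rename, ← hf a]; exact .name (f a)
  | app g ts hl _ ih =>
    rw [Tm.rename_app]
    exact .app g _ (by simpa using hl) (forall_mem_zip_map ih)
  | abs a t σ _ ih => rw [Tm.rename, ← hf a]; exact .abs (f a) _ σ ih

theorem TmTyped.subst {Γ Γ' : ℕ → Option (NomSort L.NSort L.DSort)} {θ : ℕ → Tm L}
    (hθ : GroundingSubst Γ Γ' θ) {t : Tm L} {σ : NomSort L.NSort L.DSort}
    (h : TmTyped Γ t σ) : TmTyped Γ' (t.subst θ) σ := by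
  induction h with
  | var X σ h =>
    rw [Tm.subst]
    rcases hθ X σ h with h | ⟨h, h'⟩
    · exact .of_isTm h
    · rw [h]; exact .var X σ h'
  | name a => rw [Tm.subst]; exact .name a
  | app g ts hl _ ih =>
    rw [Tm.subst_app]
    exact .app g _ (by simpa using hl) (forall_mem_zip_map ih)
  | abs a t σ _ ih => rw [Tm.subst]; exact .abs a _ σ ih

theorem AtomTyped.rename {Γ : ℕ → Option (NomSort L.NSort L.DSort)} {f : L.Name → L.Name}
    (hf : ∀ c, (f c).1 = c.1) {A : NAtom L} (h : AtomTyped Γ A) : AtomTyped Γ (A.rename f) :=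
  ⟨by simpa [NAtom.rename] using h.1, forall_mem_zip_map fun p hp => (h.2 p hp).rename hf⟩

theorem AtomTyped.subst {Γ Γ' : ℕ → Option (NomSort L.NSort L.DSort)} {θ : ℕ → Tm L}
    (hθ : GroundingSubst Γ Γ' θ) {A : NAtom L} (h : AtomTyped Γ A) : AtomTyped Γ' (A.subst θ) :=
  ⟨by simpa [NAtom.subst] using h.1, forall_mem_zip_map fun p hp => (h.2 p hp).subst hθ⟩

theorem mem_BL_iff_atomTyped {A : NAtom L} : A ∈ BL L ↔ AtomTyped (fun _ => none) A :=
  ⟨fun h => ⟨h.1, fun p hp => .of_isTm (h.2 p hp)⟩, fun h => ⟨h.1, fun p hp => (h.2 p hp).isTm⟩⟩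

theorem HeadTyped.rename {Γ : ℕ → Option (NomSort L.NSort L.DSort)} {f : L.Name → L.Name}
    (hf : ∀ c, (f c).1 = c.1) {D : NCl L} (h : HeadTyped Γ D) : HeadTyped Γ (D.rename f) := by
  induction D generalizing Γ with
  | tt => trivial
  | atom A => exact AtomTyped.rename hf h
  | and D D' ih ih' => exact ⟨ih h.1, ih' h.2⟩
  | imp G D ih => exact ih (Γ := Γ) h
  | all X σ D ih => exact ih (Γ := Function.update Γ X (some σ)) h
  | nu a D ih => exact ih (Γ := Γ) h

theorem HeadTyped.subst {Γ Γ' : ℕ → Option (NomSort L.NSort L.DSort)} {θ : ℕ → Tm L}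
    (hθ : GroundingSubst Γ Γ' θ) {D : NCl L} (h : HeadTyped Γ D) : HeadTyped Γ' (D.subst θ) := by
  induction D generalizing Γ Γ' θ with
  | tt => trivial
  | atom A => exact AtomTyped.subst hθ h
  | and D D' ih ih' => exact ⟨ih hθ h.1, ih' hθ h.2⟩
  | imp G D ih => exact ih (Γ := Γ) hθ h
  | all X σ D ih =>
    refine ih (Γ := Function.update Γ X (some σ)) (Γ' := Function.update Γ' X (some σ)) ?_ h
    intro Y τ hY
    by_cases hYX : Y = X
    · subst hYX
      right
      simpa using hY
    · simp only [Function.update_of_ne hYX] at hY ⊢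
      exact hθ Y τ hY
  | nu a D ih => exact ih (Γ := Γ) hθ h

theorem HeadTyped.of_ws {Γ : ℕ → Option (NomSort L.NSort L.DSort)}
    {vs : ℕ → NomSort L.NSort L.DSort} {D : NCl L} (h : NCl.WS vs D)
    (hΓ : ∀ X, NCl.FVa X D → Γ X = some (vs X)) : HeadTyped Γ D := by
  induction D generalizing Γ vs with
  | tt => trivial
  | atom A =>
    exact ⟨h.1, fun p hp => .of_tmS (h.2 p hp) fun X hX =>
      hΓ X (.atom X A ⟨p.1, (List.of_mem_zip hp).1, hX⟩)⟩
  | and D D' ih ih' =>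
    exact ⟨ih h.1 fun X hX => hΓ X (.and₁ X D D' hX), ih' h.2 fun X hX => hΓ X (.and₂ X D D' hX)⟩
  | imp G D ih => exact ih (Γ := Γ) h.2 fun X hX => hΓ X (.imp₂ X G D hX)
  | all X σ D ih =>
    refine ih (Γ := Function.update Γ X (some σ)) h fun Y hY => ?_
    by_cases hYX : Y = X
    · subst hYX; simp
    · simp only [Function.update_of_ne hYX]
      exact hΓ Y (.all Y X σ D hYX hY)
  | nu a D ih => exact ih (Γ := Γ) (vs := vs) h fun X hX => hΓ X (.nu X a D hX)

/-- Without any sorts there is no sort assignment, so well-sortedness under all assignments says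
nothing.  But then there are no names and no function symbols, every term is a variable, and closed
atoms have no arguments. -/
theorem HeadTyped.of_isEmpty [IsEmpty (NomSort L.NSort L.DSort)] {D : NCl L}
    (h : NCl.ClosedV D) : HeadTyped (fun _ => none) D := by
  induction D with
  | tt => trivial
  | atom A =>
    have hargs : A.args = [] := by
      rw [List.eq_nil_iff_forall_not_mem]
      intro t ht
      cases t with
      | var X => exact h X (.atom X A ⟨_, ht, .var X⟩)
      | name a => exact isEmptyElim (NomSort.name a.1 : NomSort L.NSort L.DSort)
      | app f ts => exact isEmptyElim (NomSort.data (L.fRes f) : NomSort L.NSort L.DSort)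
      | abs a t => exact isEmptyElim (NomSort.name a.1 : NomSort L.NSort L.DSort)
    have hsorts : L.rArgs A.rel = [] :=
      List.eq_nil_iff_forall_not_mem.2 fun σ _ => isEmptyElim σ
    simp [HeadTyped, AtomTyped, hargs, hsorts]
  | and D D' ih ih' =>
    exact ⟨ih fun X hX => h X (.and₁ X D D' hX), ih' fun X hX => h X (.and₂ X D D' hX)⟩
  | imp G D ih => exact ih fun X hX => h X (.imp₂ X G D hX)
  | all X σ D ih => exact isEmptyElim σ
  | nu a D ih => exact ih fun X hX => h X (.nu X a D hX)

/-! ### The Herbrand base as a model -/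

theorem BL_equivariant : EquivariantSet (BL L) :=
  equivariantSet_iff.2 fun _ _ hab _ hA =>
    mem_BL_iff_atomTyped.2 ((mem_BL_iff_atomTyped.1 hA).rename (swapName_fst hab))

/-- The Herbrand base satisfies every clause whose head atoms are closed and well-sorted:
instantiating the quantifiers keeps them so, and such atoms belong to the base. -/
theorem ClSat.base (D : NCl L) (h : HeadTyped (fun _ => none) D) : ClSat (BL L) D := by
  induction hn : D.size using Nat.strong_induction_on generalizing D with
  | _ n ih =>
    subst hn
    cases D with
    | tt => simp [ClSat]
    | atom A => simpa only [ClSat] using mem_BL_iff_atomTyped.2 h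
    | and D D' =>
      simp only [ClSat]
      exact ⟨ih _ (by simp [NCl.size]) D h.1 rfl,
        ih _ (by simp [NCl.size]) D' h.2 rfl⟩
    | imp G D =>
      simp only [ClSat]
      exact fun _ => ih _ (by simp [NCl.size]) D h rfl
    | all X σ D =>
      simp only [ClSat]
      intro t ht
      refine ih _ (by simp [NCl.size]) _ (HeadTyped.subst ?_ h) rfl
      intro Y τ hY
      by_cases hYX : Y = X
      · subst hYX
        simp only [Function.update_self, Option.some.injEq] at hY
        subst hY
        left
        simpa [substSingle] using ht
      · simp [Function.update_of_ne hYX] at hY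
    | nu a D =>
      simp only [ClSat]
      intro b hb _
      exact ih _ (by simp [NCl.size]) _ (HeadTyped.rename (swapName_fst hb) h) rfl

theorem BL_isHModel {Δ : Set (NCl L)} (hclv : ∀ D ∈ Δ, NCl.ClosedV D)
    (hws : ∀ D ∈ Δ, ∀ vs : ℕ → NomSort L.NSort L.DSort, NCl.WS vs D) :
    IsHModel Δ (BL L) := by
  refine ⟨Set.Subset.rfl, BL_equivariant, fun D hD => ClSat.base D ?_⟩
  rcases isEmpty_or_nonempty (NomSort L.NSort L.DSort) with _ | ⟨⟨σ⟩⟩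
  · exact HeadTyped.of_isEmpty (hclv D hD)
  · exact HeadTyped.of_ws (hws D hD fun _ => σ) fun X hX => (hclv D hD X hX).elim

/-! **Statement 3.**  The least Herbrand model of a program. -/
theorem stmt3 (L : NomSig)
    (hinhab : ∀ σ : NomSort L.NSort L.DSort, ∃ t : Tm L, IsTm t σ)
    (Δ : Set (NCl L)) (hfin : Δ.Finite) (hclv : ∀ D ∈ Δ, NCl.ClosedV D)
    (hws : ∀ D ∈ Δ, ∀ vs : ℕ → NomSort L.NSort L.DSort, NCl.WS vs D) :
    IsHModel Δ (⋂₀ {H : Set (NAtom L) | IsHModel Δ H}) ∧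
    (∀ H : Set (NAtom L), IsHModel Δ H → ⋂₀ {H : Set (NAtom L) | IsHModel Δ H} ⊆ H) ∧
    ⋂₀ {H : Set (NAtom L) | IsHModel Δ H} =
      {A : NAtom L | A ∈ BL L ∧ ∀ H : Set (NAtom L), IsHModel Δ H → A ∈ H} := by
  have hbase : IsHModel Δ (BL L) := BL_isHModel hclv hws
  have hsub : ⋂₀ {H : Set (NAtom L) | IsHModel Δ H} ⊆ BL L := Set.sInter_subset_of_mem hbase
  refine ⟨⟨hsub, EquivariantSet.sInter fun H hH => hH.2.1, fun D hD =>
    ClSat.sInter D fun H hH => hH.2.2 D hD⟩, fun H hH => Set.sInter_subset_of_mem hH, ?_⟩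
  ext A
  exact ⟨fun hA => ⟨hsub hA, fun H hH => hA H hH⟩, fun hA H hH => hA.2 H hH⟩

end
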